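/- Let (X,d) be a compact metric space, f: X → X a continuous map with the g-almost product property for some blowup function g, and φ: X → ℝ a continuous function. Then mdim_M^B-upper(X,f,d) = mdim_M^B-upper(⋃_{a∈L_φ} R_φ(a),f,d). -/

import Mathlib

open MeasureTheory Filter Set Topology
open scoped ENNReal NNReal

noncomputable section

namespace MMD

variable {X : Type*}

/-! ### Bowen balls, Bowen topological entropy and metric mean dimension -/

/-- The Bowen ball `B_n(x,ε) = {y | d_n(x,y) < ε}` where `d_n` is the Bowen metric. -/
def bowenBall [PseudoMetricSpace X] (f : X → X) (x : X) (n : ℕ) (ε : ℝ) : Set X :=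
  {y | ∀ i < n, dist (f^[i] x) (f^[i] y) < ε}

/-- The weight sum `Σ_{(x,n) ∈ C} exp (-s n)` of a (countable) collection of Bowen balls,
encoded by its set of centers/lengths. -/
def coverSum (s : ℝ) (C : Set (X × ℕ)) : ℝ≥0∞ :=
  ∑' p : C, ENNReal.ofReal (Real.exp (-s * ((p : X × ℕ).2 : ℝ)))

/-- `m(Z,s,N,ε,f)`: infimum over countable (or finite) covers of `Z` by Bowen balls
`B_{n_i}(x_i,ε)` with `n_i ≥ N` of `Σ exp (-s n_i)`. -/
def mB [PseudoMetricSpace X] (f : X → X) (Z : Set X) (s : ℝ) (N : ℕ) (ε : ℝ) : ℝ≥0∞ :=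
  ⨅ (C : Set (X × ℕ)) (_ : C.Countable) (_ : ∀ p ∈ C, N ≤ p.2)
    (_ : Z ⊆ ⋃ p ∈ C, bowenBall f p.1 p.2 ε), coverSum s C

/-- `m(Z,s,ε) = lim_{N→∞} m(Z,s,N,ε,f)`; the limit of this monotone quantity is the sup. -/
def mBLim [PseudoMetricSpace X] (f : X → X) (Z : Set X) (s : ℝ) (ε : ℝ) : ℝ≥0∞ :=
  ⨆ N : ℕ, mB f Z s N ε

/-- The Bowen topological entropy of `Z` at scale `ε`:
`h_top^B(Z,f,ε) = inf {s | m(Z,s,ε) = 0}`. -/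
def hB [PseudoMetricSpace X] (f : X → X) (Z : Set X) (ε : ℝ) : ℝ :=
  sInf {s : ℝ | mBLim f Z s ε = 0}

/-- Upper Bowen metric mean dimension of `Z`. -/
def mdimUpper [PseudoMetricSpace X] (f : X → X) (Z : Set X) : ℝ :=
  limsup (fun ε : ℝ => hB f Z ε / |Real.log ε|) (𝓝[>] (0:ℝ))

/-- Lower Bowen metric mean dimension of `Z`. -/
def mdimLower [PseudoMetricSpace X] (f : X → X) (Z : Set X) : ℝ :=
  liminf (fun ε : ℝ => hB f Z ε / |Real.log ε|) (𝓝[>] (0:ℝ))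

/-! ### Finite measurable partitions and measure-theoretic entropy -/

/-- `P` is a finite measurable partition of `X` (mod `μ`): its elements are measurable,
they cover `X` up to a `μ`-null set, and they pairwise intersect in `μ`-null sets. -/
def IsPartition [MeasurableSpace X] (μ : Measure X) (P : Finset (Set X)) : Prop :=
  (∀ A ∈ P, MeasurableSet A) ∧ μ (Set.univ \ ⋃ A ∈ P, A) = 0 ∧
    ∀ A ∈ P, ∀ B ∈ P, A ≠ B → μ (A ∩ B) = 0

/-- Static entropy `H_μ(P) = -Σ_{A∈P} μ(A) log μ(A)`. -/
def partEnt [MeasurableSpace X] (μ : Measure X) (P : Finset (Set X)) : ℝ :=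
  ∑ A ∈ P, Real.negMulLog ((μ A).toReal)

/-- Join (common refinement) of two finite families of sets. -/
def joinParts (P Q : Finset (Set X)) : Finset (Set X) :=
  letI := Classical.decEq (Set X)
  (P ×ˢ Q).image fun p => p.1 ∩ p.2

/-- `dynJoin f P n = ⋁_{j=0}^{n-1} f^{-j} P`. -/
def dynJoin (f : X → X) (P : Finset (Set X)) : ℕ → Finset (Set X)
  | 0 => {Set.univ}
  | n + 1 =>
      letI := Classical.decEq (Set X)
      joinParts P ((dynJoin f P n).image fun A => f ⁻¹' A)

/-- Measure-theoretic entropy of `f` w.r.t. the partition `P`: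
`h_μ(f,P) = lim_n (1/n) H_μ(⋁_{j<n} f^{-j}P)` (the limit exists, hence equals the `limsup`). -/
def dynEnt [MeasurableSpace X] (μ : Measure X) (f : X → X) (P : Finset (Set X)) : ℝ :=
  limsup (fun n : ℕ => partEnt μ (dynJoin f P n) / n) atTop

/-- `diam P < ε`, i.e. every element of `P` has diameter `< ε`. -/
def partDiamLt [PseudoMetricSpace X] (P : Finset (Set X)) (ε : ℝ) : Prop :=
  ∀ A ∈ P, Metric.diam A < ε

/-- `inf_{ξ : diam ξ < ε} h_μ(f,ξ)`, the infimum over all finite measurable partitions of `X`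
with diameter `< ε`. -/
def infEnt [PseudoMetricSpace X] [MeasurableSpace X] (μ : Measure X) (f : X → X) (ε : ℝ) : ℝ :=
  sInf (dynEnt μ f '' {P : Finset (Set X) | IsPartition μ P ∧ partDiamLt P ε})

/-! ### Empirical measures, generic points and saturated sets -/

/-- The `n`-th empirical measure `E_n(x) = (1/n) Σ_{j<n} δ_{f^j x}` (defined as `E_1(x)`
for `n = 0`, a junk value). -/
def empMeasure [MeasurableSpace X] (f : X → X) (x : X) (n : ℕ) : Measure X :=
  ((max n 1 : ℕ) : ℝ≥0∞)⁻¹ • ∑ j ∈ Finset.range (max n 1), Measure.dirac (f^[j] x)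

instance [MeasurableSpace X] (f : X → X) (x : X) (n : ℕ) :
    IsProbabilityMeasure (empMeasure f x n) := by
  constructor
  have h1 : (0:ℕ) < max n 1 := lt_of_lt_of_le one_pos (le_max_right n 1)
  have hsum : (∑ j ∈ Finset.range (max n 1), Measure.dirac (f^[j] x)) Set.univ
      = ((max n 1 : ℕ) : ℝ≥0∞) := by
    rw [Measure.finset_sum_apply]
    simp
  simp only [empMeasure, Measure.smul_apply, smul_eq_mul, hsum]
  exact ENNReal.inv_mul_cancel (by exact_mod_cast h1.ne') (by simp)

/-- The `n`-th empirical measure as a probability measure. -/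
def empProb [MeasurableSpace X] (f : X → X) (x : X) (n : ℕ) : ProbabilityMeasure X :=
  ⟨empMeasure f x n, inferInstance⟩

/-- `V_f(x)`: the set of weak* limit points of the sequence of empirical measures of `x`. -/
def Vf [MetricSpace X] [MeasurableSpace X] [BorelSpace X] (f : X → X) (x : X) :
    Set (ProbabilityMeasure X) :=
  {ν | MapClusterPt ν atTop (empProb f x)}

/-- The saturated set `G_K = {x | V_f(x) = K}`. -/
def GK [MetricSpace X] [MeasurableSpace X] [BorelSpace X] (f : X → X)
    (K : Set (ProbabilityMeasure X)) : Set X :=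
  {x | Vf f x = K}

/-- The generic set `G_μ = {x | V_f(x) = {μ}}`. -/
def genSet [MetricSpace X] [MeasurableSpace X] [BorelSpace X] (f : X → X)
    (μ : ProbabilityMeasure X) : Set X :=
  GK f {μ}

/-! ### Invariant measures, supports, measure center, omega-limit sets -/

/-- `μ` is an `f`-invariant (Borel probability) measure. -/
def InvariantProb [MeasurableSpace X] (f : X → X) (μ : ProbabilityMeasure X) : Prop :=
  Measure.map f (μ : Measure X) = (μ : Measure X)

/-- The set `M_f(X)` of invariant probability measures. -/
def invSet [MeasurableSpace X] (f : X → X) : Set (ProbabilityMeasure X) :=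
  {μ | InvariantProb f μ}

/-- The support of a measure: points all of whose neighborhoods have positive measure. -/
def measSupport [TopologicalSpace X] [MeasurableSpace X] (μ : Measure X) : Set X :=
  {x | ∀ U ∈ 𝓝 x, 0 < μ U}

/-- The measure center `C_f(X) = closure (⋃_{μ ∈ M_f(X)} S_μ)`. -/
def measCenter [TopologicalSpace X] [MeasurableSpace X] (f : X → X) : Set X :=
  closure (⋃ μ ∈ invSet f, measSupport (μ : Measure X))

/-- The omega-limit set `ω_f(x) = ⋂_n closure {f^k x : k ≥ n}`. -/
def omegaSet [TopologicalSpace X] (f : X → X) (x : X) : Set X :=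
  ⋂ n : ℕ, closure {y | ∃ k, n ≤ k ∧ f^[k] x = y}

/-- The set of points whose omega-limit set contains the measure center. -/
def CtrSet [TopologicalSpace X] [MeasurableSpace X] (f : X → X) : Set X :=
  {x | measCenter f ⊆ omegaSet f x}

/-! ### Blow-up functions and the g-almost product property -/

/-- A blowup function: nondecreasing, unbounded, `g n < n` and `g n / n → 0`. -/
structure IsBlowup (g : ℕ → ℕ) : Prop where
  mono : Monotone g
  unbounded : ∀ C : ℕ, ∃ n, C < g n
  lt_self : ∀ n, 0 < n → g n < n
  ratio_tendsto_zero : Tendsto (fun n : ℕ => (g n : ℝ) / n) atTop (𝓝 0)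

/-- The g-blowup `B_n(g;x,ε)` of the Bowen ball `B_n(x,ε)`. -/
def blowupBall [PseudoMetricSpace X] (f : X → X) (g : ℕ → ℕ) (x : X) (n : ℕ) (ε : ℝ) :
    Set X :=
  {y | ∃ Λ : Finset ℕ, Λ ⊆ Finset.range n ∧
    letI := Classical.decEq ℕ
    (Finset.range n \ Λ).card ≤ g n ∧ ∀ j ∈ Λ, dist (f^[j] x) (f^[j] y) ≤ ε}

/-- The g-almost product property. -/
def GAlmostProduct [PseudoMetricSpace X] (f : X → X) (g : ℕ → ℕ) : Prop :=
  ∃ m : ℝ → ℕ, (∀ s t : ℝ, 0 < s → s ≤ t → m t ≤ m s) ∧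
    ∀ (k : ℕ) (x : ℕ → X) (ε : ℕ → ℝ) (n : ℕ → ℕ),
      (∀ j < k, 0 < ε j) → (∀ j < k, m (ε j) ≤ n j) →
      (⋂ j ∈ Finset.range k,
        (f^[∑ i ∈ Finset.range j, n i] ⁻¹' blowupBall f g (x j) (n j) (ε j))).Nonempty

/-! ### Separated sets and Pfister–Sullivan quantities -/

/-- The number of times `0 ≤ j < n` at which the orbits of `x` and `y` are `ε`-apart. -/
def sepCount [PseudoMetricSpace X] (f : X → X) (x y : X) (n : ℕ) (ε : ℝ) : ℕ :=
  letI := Classical.decPred fun j : ℕ => ε < dist (f^[j] x) (f^[j] y)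
  ((Finset.range n).filter fun j => ε < dist (f^[j] x) (f^[j] y)).card

/-- `N(F; δ, n, ε)`: maximal cardinality of a `(δ,n,ε)`-separated subset of
`X_{n,F} = {x | E_n(x) ∈ F}`. -/
def NsepD [MetricSpace X] [MeasurableSpace X] [BorelSpace X] (f : X → X)
    (F : Set (ProbabilityMeasure X)) (δ : ℝ) (n : ℕ) (ε : ℝ) : ℕ :=
  sSup {c : ℕ | ∃ E : Finset X, (↑E : Set X) ⊆ {x | empProb f x n ∈ F} ∧
    (∀ x ∈ E, ∀ y ∈ E, x ≠ y → δ * n ≤ (sepCount f x y n ε : ℝ)) ∧ E.card = c}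

/-- `N(F; n, ε)`: maximal cardinality of an `(n,ε)`-separated subset of `X_{n,F}`. -/
def NsepP [MetricSpace X] [MeasurableSpace X] [BorelSpace X] (f : X → X)
    (F : Set (ProbabilityMeasure X)) (n : ℕ) (ε : ℝ) : ℕ :=
  sSup {c : ℕ | ∃ E : Finset X, (↑E : Set X) ⊆ {x | empProb f x n ∈ F} ∧
    (∀ x ∈ E, ∀ y ∈ E, x ≠ y → ∃ i < n, ε < dist (f^[i] x) (f^[i] y)) ∧ E.card = c}

/-- `PS-bar(μ,δ,ε) = inf_{F ∋ μ} limsup_n (1/n) ln N(F;δ,n,ε)`. -/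
def PSbar [MetricSpace X] [MeasurableSpace X] [BorelSpace X] (f : X → X)
    (μ : ProbabilityMeasure X) (δ ε : ℝ) : ℝ :=
  sInf ((fun F => limsup (fun n : ℕ => Real.log (NsepD f F δ n ε) / n) atTop) ''
    {F : Set (ProbabilityMeasure X) | F ∈ 𝓝 μ})

/-! ### Convex combinations of probability measures -/

/-- The convex hull `cov{μ_1,…,μ_m}` of finitely many probability measures. -/
def convexCombos [MeasurableSpace X] {m : ℕ} (μ : Fin m → ProbabilityMeasure X) :
    Set (ProbabilityMeasure X) :=
  {ν | ∃ t : Fin m → ℝ≥0∞, (∑ i, t i) = 1 ∧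
    (ν : Measure X) = ∑ i, t i • (μ i : Measure X)}

/-- The convex combination `θ μ + (1-θ) ν` of two probability measures (with `θ`
clamped into `[0,1]`). -/
def mixP [MeasurableSpace X] (μ ν : ProbabilityMeasure X) (θ : ℝ) : ProbabilityMeasure X :=
  ⟨ENNReal.ofReal (min (max θ 0) 1) • (μ : Measure X)
      + ENNReal.ofReal (1 - min (max θ 0) 1) • (ν : Measure X), by
    constructor
    set t := min (max θ 0) 1 with ht
    have h0 : 0 ≤ t := le_min (le_max_right θ 0) zero_le_one
    have h1 : t ≤ 1 := min_le_right _ _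
    rw [Measure.add_apply, Measure.smul_apply, Measure.smul_apply, measure_univ, measure_univ,
      smul_eq_mul, smul_eq_mul, mul_one, mul_one, ← ENNReal.ofReal_add h0 (by linarith)]
    have : t + (1 - t) = 1 := by ring
    rw [this, ENNReal.ofReal_one]⟩

/-- Condition A.3: for invariant `μ, ν` with `α μ ≠ α ν`, the map
`θ ↦ α(θμ + (1-θ)ν)` is not constant on any nondegenerate subinterval of `[0,1]`. -/
def CondA3 [MeasurableSpace X] (f : X → X) (α : ProbabilityMeasure X → ℝ) : Prop :=
  ∀ μ ∈ invSet f, ∀ ν ∈ invSet f, α μ ≠ α ν →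
    ∀ a b : ℝ, 0 ≤ a → a < b → b ≤ 1 →
      ¬ (∀ s ∈ Set.Icc a b, ∀ t ∈ Set.Icc a b, α (mixP μ ν s) = α (mixP μ ν t))

end MMD

end

open MMD MeasureTheory Filter Set Topology
open scoped ENNReal NNReal

noncomputable section

/-- `∫ φ dμ` for a probability measure `μ`. -/
noncomputable def intPhi {X : Type*} [MeasurableSpace X] (φ : X → ℝ)
    (μ : ProbabilityMeasure X) : ℝ :=
  ∫ x, φ x ∂(μ : Measure X)

/-- The level set `R_φ(a)` of the Birkhoff averages of `φ`. -/
def Rphi {X : Type*} (f : X → X) (φ : X → ℝ) (a : ℝ) : Set X :=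
  {x | Tendsto (fun n : ℕ => (∑ i ∈ Finset.range n, φ (f^[i] x)) / n) atTop (𝓝 a)}

/-- The irregular set `I_φ` of `φ`: points where the Birkhoff average does not converge. -/
def Iphi {X : Type*} (f : X → X) (φ : X → ℝ) : Set X :=
  {x | ¬ ∃ a : ℝ, Tendsto (fun n : ℕ => (∑ i ∈ Finset.range n, φ (f^[i] x)) / n) atTop (𝓝 a)}

/-- `H_φ(a,ε) = (1/|log ε|) sup_{μ ∈ M_f(X,φ,a)} inf_{diam ξ < ε} h_μ(f,ξ)`. -/
noncomputable def Hphi {X : Type*} [MetricSpace X] [MeasurableSpace X] [BorelSpace X]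
    (f : X → X) (φ : X → ℝ) (a : ℝ) (ε : ℝ) : ℝ :=
  (1 / |Real.log ε|) *
    sSup ((fun ν : ProbabilityMeasure X => infEnt (ν : Measure X) f ε) ''
      {ν | ν ∈ invSet f ∧ intPhi φ ν = a})

/-!
Every cover of `X` by Bowen balls covers each subset of `X`, so only the lower bound for the union
needs an argument. Fix `ε` and suppose that the entropy of `X` at scale `12 ε` exceeds `s`. The
points whose orbit segments of length `n` are far from a given one at `o(n)` times only can be
covered by `exp (o(n))` Bowen balls. Hence for all large `n` there are about `exp (s n)` orbit
segments of length `n`, any two of which are `4 ε`-apart at more than `2 g(n)` times, and by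
pigeonhole they may be chosen with Birkhoff averages close to a common number `a`. The `g`-almost
product property concatenates them in every order, and separation at more than `2 g(n)` times
survives the errors that it allows. The resulting Moran set lies in `R_φ(a)`, and the mass
distribution principle for a uniform product measure bounds its entropy at scale `ε` from below.
The factor `12` disappears after division by `|log ε|`. Finally, `R_φ(a)` is empty unless
`a ∈ L_φ`: an accumulation point of the empirical measures of a point of `R_φ(a)` is an invariant
measure with integral `a`.
-/

namespace MMD

/-! ### Covers by Bowen balls -/

theorem exists_finset_representatives {α β : Type*} (c : α → β) (T : Finset β) :
    ∃ F : Finset α, F.card ≤ T.card ∧ ∀ x, c x ∈ T → ∃ y ∈ F, c y = c x := by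
  classical
  obtain ⟨F, -, hinj, himage⟩ := Finset.exists_subset_injOn_image_eq_of_surjOn univ
    (T.filter (· ∈ range c)) fun b hb => by simpa using (Finset.mem_filter.1 hb).2
  refine ⟨F, ?_, fun x hx => ?_⟩
  · rw [← Finset.card_image_of_injOn hinj, himage]
    exact Finset.card_filter_le ..
  · exact Finset.mem_image.1 (himage ▸ Finset.mem_filter.2 ⟨hx, mem_range_self x⟩)

section Cover

variable {X : Type*} [PseudoMetricSpace X] {f : X → X} {Z W : Set X} {F : Finset X} {s ε : ℝ}
  {n N : ℕ}

theorem exists_finite_coding [CompactSpace X] (hε : 0 < ε) :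
    ∃ (M : ℕ) (c : X → Fin M), ∀ x y, c x = c y → dist x y < ε := by
  obtain ⟨T, -, hTfin, hT⟩ := finite_cover_balls_of_compact (isCompact_univ (X := X)) (half_pos hε)
  have hcenter : ∀ x : X, ∃ y : T, dist x (y : X) < ε / 2 := fun x => by simpa using hT (mem_univ x)
  choose center hcenter using hcenter
  have := hTfin.fintype
  refine ⟨_, fun x => Fintype.equivFin T (center x), fun x y hxy => ?_⟩
  have hy := hcenter y
  rw [← (Fintype.equivFin T).injective hxy] at hy
  linarith [hcenter x, dist_triangle_right x y (center x)]

/-- `F` is `(n, ε)`-spanning: the Bowen balls `B_n(y, ε)` with `y ∈ F` cover the whole space. The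
cardinality of such a set bounds the covering sums of `univ`. -/
def BowenSpans (f : X → X) (n : ℕ) (ε : ℝ) (F : Finset X) : Prop :=
  ∀ x, ∃ y ∈ F, x ∈ bowenBall f y n ε

theorem exists_bowenSpans_card_le_pow [CompactSpace X] (f : X → X) (hε : 0 < ε) :
    ∃ M : ℕ, ∀ n, ∃ F : Finset X, BowenSpans f n ε F ∧ F.card ≤ M ^ n := by
  obtain ⟨M, c, hc⟩ := exists_finite_coding (X := X) hε
  refine ⟨M, fun n => ?_⟩
  let itinerary (x : X) (i : Fin n) : Fin M := c (f^[i] x)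
  obtain ⟨F, hcard, hF⟩ := exists_finset_representatives itinerary Finset.univ
  refine ⟨F, fun x => ?_, by simpa using hcard⟩
  obtain ⟨y, hyF, hyx⟩ := hF x (Finset.mem_univ _)
  exact ⟨y, hyF, fun i hi => hc _ _ (congrFun hyx ⟨i, hi⟩)⟩

theorem coverSum_image_finset {α : Type*} (s : ℝ) (n : ℕ) (F : Finset α) :
    coverSum s ((·, n) '' (F : Set α)) = ENNReal.ofReal (F.card * Real.exp (-s * n)) := by
  classical
  rw [coverSum, ← Finset.coe_image, Finset.tsum_subtype' (F.image (·, n))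
    fun p : α × ℕ => ENNReal.ofReal (Real.exp (-s * p.2)),
    Finset.sum_image (Prod.mk_left_injective n).injOn]
  simp [ENNReal.ofReal_mul]

theorem mB_univ_le_of_bowenSpans (hF : BowenSpans f n ε F) (hn : N ≤ n) :
    mB f univ s N ε ≤ ENNReal.ofReal (F.card * Real.exp (-s * n)) := by
  rw [← coverSum_image_finset]
  refine iInf₂_le_of_le _ (F.finite_toSet.image _).countable
    (iInf₂_le_of_le (forall_mem_image.2 fun _ _ => hn) (fun x _ => ?_) le_rfl)
  obtain ⟨y, hy, hxy⟩ := hF x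
  exact mem_iUnion₂.2 ⟨(y, n), mem_image_of_mem _ hy, hxy⟩

theorem exists_mul_exp_le_card_of_mBLim_univ_ne_zero (h : mBLim f univ s ε ≠ 0) :
    ∃ c > 0, ∀ᶠ n : ℕ in atTop, ∀ F : Finset X, BowenSpans f n ε F →
      c * Real.exp (s * n) ≤ F.card := by
  obtain ⟨N, hN⟩ : ∃ N, mB f univ s N ε ≠ 0 := by simpa [mBLim] using h
  obtain ⟨c, hc, hcN⟩ := ENNReal.lt_iff_exists_nnreal_btwn.1 (pos_iff_ne_zero.2 hN)
  refine ⟨c, by simpa using hc, eventually_atTop.2 ⟨N, fun n hn F hF => ?_⟩⟩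
  have hle : (c : ℝ) ≤ F.card * Real.exp (-s * n) := by
    have := hcN.le.trans (mB_univ_le_of_bowenSpans hF hn)
    rwa [← ENNReal.ofReal_coe_nnreal, ENNReal.ofReal_le_ofReal_iff (by positivity)] at this
  calc (c : ℝ) * Real.exp (s * n) ≤ F.card * Real.exp (-s * n) * Real.exp (s * n) := by gcongr
    _ = F.card := by rw [mul_assoc, ← Real.exp_add]; simp

theorem exists_mBLim_univ_eq_zero [CompactSpace X] (f : X → X) (hε : 0 < ε) :
    ∃ s, mBLim f univ s ε = 0 := by
  obtain ⟨M, hM⟩ := exists_bowenSpans_card_le_pow f hε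
  refine ⟨Real.log (M + 1) + 1, not_not.1 fun h => ?_⟩
  obtain ⟨c, hc, hev⟩ := exists_mul_exp_le_card_of_mBLim_univ_ne_zero h
  have hlim : Tendsto (fun n : ℕ => c * Real.exp n) atTop atTop :=
    (Real.tendsto_exp_atTop.comp tendsto_natCast_atTop_atTop).const_mul_atTop hc
  obtain ⟨n, hspan, hbig⟩ := (hev.and (hlim.eventually_gt_atTop 1)).exists
  obtain ⟨F, hF, hcard⟩ := hM n
  have hpow : Real.exp ((Real.log (M + 1) + 1) * n) = (M + 1) ^ n * Real.exp n := by
    rw [add_mul, one_mul, Real.exp_add, mul_comm _ (n : ℝ), Real.exp_nat_mul,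
      Real.exp_log (by positivity)]
  have : ((M : ℝ) + 1) ^ n * 1 < (M + 1) ^ n := calc
    ((M : ℝ) + 1) ^ n * 1 < (M + 1) ^ n * (c * Real.exp n) := by gcongr
    _ = c * Real.exp ((Real.log (M + 1) + 1) * n) := by rw [hpow]; ring
    _ ≤ F.card := hspan F hF
    _ ≤ (M : ℝ) ^ n := by exact_mod_cast hcard
    _ ≤ (M + 1) ^ n := by gcongr; simp
  simp at this

theorem mBLim_mono (h : Z ⊆ W) : mBLim f Z s ε ≤ mBLim f W s ε :=
  iSup_mono fun _ => iInf_mono fun _ => iInf_mono fun _ => iInf_mono fun _ =>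
    iInf_mono' fun hW => ⟨h.trans hW, le_rfl⟩

theorem mBLim_ne_zero_of_one_le_coverSum (N : ℕ)
    (h : ∀ C : Set (X × ℕ), C.Countable → (∀ p ∈ C, N ≤ p.2) →
      Z ⊆ ⋃ p ∈ C, bowenBall f p.1 p.2 ε → 1 ≤ coverSum s C) :
    mBLim f Z s ε ≠ 0 := by
  have hN : 1 ≤ mB f Z s N ε :=
    le_iInf₂ fun C hC => le_iInf₂ fun hCN hCZ => h C hC hCN hCZ
  exact (one_pos.trans_le (hN.trans (le_iSup (fun N => mB f Z s N ε) N))).ne'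

theorem mBLim_ne_zero_of_nonpos (hZ : Z.Nonempty) (hs : s ≤ 0) : mBLim f Z s ε ≠ 0 := by
  refine mBLim_ne_zero_of_one_le_coverSum 0 fun C _ _ hC => ?_
  obtain ⟨x, hx⟩ := hZ
  obtain ⟨p, hp, -⟩ := mem_iUnion₂.1 (hC hx)
  refine le_trans ?_ (ENNReal.le_tsum (⟨p, hp⟩ : C))
  rw [ENNReal.one_le_ofReal, Real.one_le_exp_iff]
  exact mul_nonneg (neg_nonneg.2 hs) p.2.cast_nonneg

theorem nonempty_of_mBLim_ne_zero (h : mBLim f Z s ε ≠ 0) : Z.Nonempty := by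
  rw [nonempty_iff_ne_empty]
  rintro rfl
  refine h (iSup_eq_bot.2 fun N => le_bot_iff.1 ?_)
  exact iInf₂_le_of_le ∅ countable_empty
    (iInf₂_le_of_le (by simp) (empty_subset _) (by simp [coverSum]))

theorem pos_of_mBLim_eq_zero (hZ : Z.Nonempty) (h : mBLim f Z s ε = 0) : 0 < s :=
  not_le.1 fun hs => mBLim_ne_zero_of_nonpos hZ hs h

theorem hB_nonneg (hZ : Z.Nonempty) : 0 ≤ hB f Z ε :=
  Real.sInf_nonneg fun _ hs => (pos_of_mBLim_eq_zero hZ hs).le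

theorem hB_le_of_mBLim_eq_zero (hZ : Z.Nonempty) (h : mBLim f Z s ε = 0) : hB f Z ε ≤ s :=
  csInf_le ⟨0, fun _ ht => (pos_of_mBLim_eq_zero hZ ht).le⟩ h

theorem hB_le_hB_univ [CompactSpace X] (hZ : Z.Nonempty) (hε : 0 < ε) :
    hB f Z ε ≤ hB f univ ε :=
  le_csInf (exists_mBLim_univ_eq_zero f hε) fun _ hs =>
    hB_le_of_mBLim_eq_zero hZ (le_zero_iff.1 ((mBLim_mono (subset_univ Z)).trans_eq hs))

theorem hB_univ_le_hB [CompactSpace X] [Nonempty X] {ε' : ℝ} (hε : 0 < ε)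
    (h : ∀ s t, t < s → mBLim f univ s ε' ≠ 0 → mBLim f Z t ε ≠ 0) :
    hB f univ ε' ≤ hB f Z ε := by
  obtain ⟨s₀, hs₀⟩ := exists_mBLim_univ_eq_zero f hε
  refine le_csInf ⟨s₀, le_zero_iff.1 ((mBLim_mono (subset_univ Z)).trans_eq hs₀)⟩ fun t ht => ?_
  exact le_of_forall_gt_imp_ge_of_dense fun s hts =>
    hB_le_of_mBLim_eq_zero univ_nonempty (not_not.1 fun hs => h s t hts hs ht)

end Cover

/-! ### Hamming-separated sets -/

section Hamming

variable {X : Type*} [PseudoMetricSpace X] {f : X → X} {n m : ℕ} {r s s' t : ℝ}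

theorem sepCount_comm (f : X → X) (x y : X) (n : ℕ) (r : ℝ) :
    sepCount f x y n r = sepCount f y x n r := by
  simp only [sepCount, dist_comm]

theorem sepCount_self (f : X → X) (x : X) (n : ℕ) (hr : 0 ≤ r) : sepCount f x x n r = 0 := by
  simp [sepCount, hr]

/-- The orbit segments of length `n` of any two distinct points of `E` are more than `r` apart at
more than `m` times. For `m = 2 g(n)` this separation survives the errors of the `g`-almost product
property. -/
def IsHammingSeparated (f : X → X) (n m : ℕ) (r : ℝ) (E : Finset X) : Prop :=
  (E : Set X).Pairwise fun x y => m < sepCount f x y n r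

theorem exists_maximal_isHammingSeparated (f : X → X) (n m : ℕ) (hr : 0 ≤ r) (G : Finset X) :
    ∃ E : Finset X, IsHammingSeparated f n m r E ∧ ∀ z ∈ G, ∃ e ∈ E, sepCount f e z n r ≤ m := by
  classical
  obtain ⟨E, hE, hmax⟩ := (G.powerset.filter (IsHammingSeparated f n m r)).exists_maximal
    ⟨∅, by simp [IsHammingSeparated]⟩
  simp only [Finset.mem_filter, Finset.mem_powerset] at hE hmax
  refine ⟨E, hE.2, fun z hz => ?_⟩
  by_contra! hfar
  have hinsert : IsHammingSeparated f n m r (insert z E) := by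
    rw [IsHammingSeparated, Finset.coe_insert, pairwise_insert]
    exact ⟨hE.2, fun e he _ => ⟨sepCount_comm f e z n r ▸ hfar e he, hfar e he⟩⟩
  have hzE : z ∈ E := hmax ⟨Finset.insert_subset hz hE.1, hinsert⟩ (Finset.subset_insert z E)
    (Finset.mem_insert_self z E)
  exact (hfar z hzE).not_ge (by simp [sepCount_self f z n hr])

theorem card_filter_card_isSome_le_mul_pow_le {α : Type*} [Fintype α] (n m : ℕ) (ht₀ : 0 ≤ t)
    (ht₁ : t ≤ 1) :
    (Finset.card {w : Fin n → Option α | Finset.card {i | (w i).isSome} ≤ m} : ℝ) * t ^ m ≤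
      (1 + t * Fintype.card α) ^ n := by
  -- A word with at most `m` entries other than `none` has weight at least `t ^ m`.
  let weight (o : Option α) : ℝ := if o.isSome then t else 1
  have hweight (o : Option α) : 0 ≤ weight o := by simp only [weight]; split_ifs <;> simp [ht₀]
  have hprod (w : Fin n → Option α) :
      ∏ i, weight (w i) = t ^ Finset.card {i | (w i).isSome} := by
    simp [weight, Finset.prod_ite]
  calc (Finset.card {w : Fin n → Option α | Finset.card {i | (w i).isSome} ≤ m} : ℝ) * t ^ m
      = ∑ w : Fin n → Option α with Finset.card {i | (w i).isSome} ≤ m, t ^ m := by simp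
    _ ≤ ∑ w : Fin n → Option α with Finset.card {i | (w i).isSome} ≤ m, ∏ i, weight (w i) :=
        Finset.sum_le_sum fun w hw => by
          rw [hprod]
          exact pow_le_pow_of_le_one ht₀ ht₁ (Finset.mem_filter.1 hw).2
    _ ≤ ∑ w : Fin n → Option α, ∏ i, weight (w i) :=
        Finset.sum_le_univ_sum_of_nonneg fun w => Finset.prod_nonneg fun i _ => hweight _
    _ = (1 + t * Fintype.card α) ^ n := by
        rw [← Fintype.sum_pow, Fintype.sum_option]
        simp [weight, mul_comm]

theorem exists_cover_hammingBall [CompactSpace X] (f : X → X) (hr : 0 < r) :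
    ∃ M : ℕ, ∀ (n m : ℕ) (t : ℝ), 0 ≤ t → t ≤ 1 → ∀ e, ∃ F : Finset X,
      (F.card : ℝ) * t ^ m ≤ (1 + t * M) ^ n ∧ ∀ z, sepCount f e z n r ≤ m →
        ∃ y ∈ F, ∀ i < n, dist (f^[i] y) (f^[i] z) ≤ 2 * r := by
  classical
  obtain ⟨M, c, hc⟩ := exists_finite_coding (X := X) hr
  refine ⟨M, fun n m t ht₀ ht₁ e => ?_⟩
  -- Only the times at which the orbit of `z` is far from the orbit of `e` are recorded.
  let word (z : X) (i : Fin n) : Option (Fin M) :=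
    if r < dist (f^[i] e) (f^[i] z) then some (c (f^[i] z)) else none
  obtain ⟨F, hcard, hF⟩ := exists_finset_representatives word
    {w | Finset.card {i | (w i).isSome} ≤ m}
  refine ⟨F, ?_, fun z hz => ?_⟩
  · calc (F.card : ℝ) * t ^ m ≤ _ := by gcongr
      _ ≤ _ := card_filter_card_isSome_le_mul_pow_le n m ht₀ ht₁
      _ = (1 + t * M) ^ n := by simp
  have hword : word z ∈ Finset.univ.filter fun w => Finset.card {i | (w i).isSome} ≤ m := by
    refine Finset.mem_filter.2 ⟨Finset.mem_univ _, le_trans ?_ hz⟩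
    refine Finset.card_le_card_of_injOn Fin.val (fun i hi => ?_) Fin.val_injective.injOn
    simpa [word] using hi
  obtain ⟨y, hyF, hyz⟩ := hF z hword
  refine ⟨y, hyF, fun i hi => ?_⟩
  have hi := congrFun hyz ⟨i, hi⟩
  simp only [word] at hi
  split_ifs at hi with hy hz hz
  · linarith [hc _ _ (Option.some.inj hi)]
  · linarith [dist_triangle_left (f^[i] y) (f^[i] z) (f^[i] e)]

theorem exists_isHammingSeparated_bowenSpans [CompactSpace X] (f : X → X) (hr : 0 < r) :
    ∃ M : ℕ, ∀ (n m : ℕ) (t : ℝ), 0 ≤ t → t ≤ 1 → ∃ E F : Finset X,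
      IsHammingSeparated f n m r E ∧ BowenSpans f n (3 * r) F ∧
        (F.card : ℝ) * t ^ m ≤ E.card * (1 + t * M) ^ n := by
  classical
  obtain ⟨M, hM⟩ := exists_cover_hammingBall f hr
  refine ⟨M, fun n m t ht₀ ht₁ => ?_⟩
  obtain ⟨G, hG, -⟩ := (exists_bowenSpans_card_le_pow f hr).choose_spec n
  obtain ⟨E, hE, hmax⟩ := exists_maximal_isHammingSeparated f n m hr.le G
  choose F hFcard hF using hM n m t ht₀ ht₁
  refine ⟨E, E.biUnion F, hE, fun x => ?_, ?_⟩
  · obtain ⟨z, hzG, hxz⟩ := hG x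
    obtain ⟨e, he, hez⟩ := hmax z hzG
    obtain ⟨y, hy, hyz⟩ := hF e z hez
    refine ⟨y, Finset.mem_biUnion.2 ⟨e, he, hy⟩, fun i hi => ?_⟩
    linarith [hyz i hi, hxz i hi, dist_triangle (f^[i] y) (f^[i] z) (f^[i] x)]
  · calc ((E.biUnion F).card : ℝ) * t ^ m ≤ (∑ e ∈ E, ((F e).card : ℝ)) * t ^ m := by
          gcongr
          exact_mod_cast Finset.card_biUnion_le
      _ = ∑ e ∈ E, ((F e).card : ℝ) * t ^ m := Finset.sum_mul ..
      _ ≤ E.card * (1 + t * M) ^ n := by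
          rw [← nsmul_eq_mul]
          exact Finset.sum_le_card_nsmul _ _ _ fun e _ => hFcard e

theorem eventually_exists_isHammingSeparated_exp_le_card [CompactSpace X] (hr : 0 < r)
    (hs : s' < s) {k : ℕ → ℕ} (hk : (fun n => (k n : ℝ)) =o[atTop] fun n => (n : ℝ))
    (h : mBLim f univ s (3 * r) ≠ 0) :
    ∀ᶠ n : ℕ in atTop, ∃ E : Finset X,
      IsHammingSeparated f n (k n) r E ∧ Real.exp (s' * n) ≤ E.card := by
  obtain ⟨c, hc, hspan⟩ := exists_mul_exp_le_card_of_mBLim_univ_ne_zero h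
  obtain ⟨M, hM⟩ := exists_isHammingSeparated_bowenSpans f hr
  obtain ⟨δ, hδ, rfl⟩ : ∃ δ > 0, s = s' + 3 * δ := ⟨(s - s') / 3, by linarith, by ring⟩
  obtain ⟨t, ht₀, ht₁, htM⟩ : ∃ t : ℝ, 0 < t ∧ t ≤ 1 ∧ t * M ≤ δ := by
    obtain ⟨c, hc, hMc⟩ := exists_pos_mul_lt hδ M
    refine ⟨min 1 c, by positivity, min_le_left 1 c, ?_⟩
    calc min 1 c * M ≤ c * M := by gcongr; exact min_le_right 1 c
      _ ≤ δ := by linarith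
  have hconst : ∀ᶠ n : ℕ in atTop, Real.exp (-(δ * n)) < c :=
    (Real.tendsto_exp_neg_atTop_nhds_zero.comp
      (tendsto_natCast_atTop_atTop.const_mul_atTop hδ)).eventually_lt_const hc
  have hpow : ∀ᶠ n : ℕ in atTop, Real.exp (-(δ * n)) ≤ t ^ k n := by
    filter_upwards [(hk.const_mul_left (Real.log t)).def hδ] with n hn
    rw [← Real.exp_log ht₀, ← Real.exp_nat_mul, Real.exp_le_exp, mul_comm (k n : ℝ)]
    exact neg_le_of_abs_le (by simpa using hn)
  filter_upwards [hspan, hconst, hpow] with n hspan hconst hpow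
  obtain ⟨E, F, hE, hF, hcard⟩ := hM n (k n) t ht₀.le ht₁
  refine ⟨E, hE, ?_⟩
  have hgrowth : (1 + t * M) ^ n ≤ Real.exp (δ * n) := by
    rw [mul_comm δ, Real.exp_nat_mul]
    gcongr
    linarith [Real.add_one_le_exp δ]
  refine le_of_mul_le_mul_right ?_ (Real.exp_pos (δ * n))
  calc Real.exp (s' * n) * Real.exp (δ * n)
      = Real.exp (-(δ * n)) * Real.exp ((s' + 3 * δ) * n) * Real.exp (-(δ * n)) := by
        simp only [← Real.exp_add]; ring_nf
    _ ≤ c * Real.exp ((s' + 3 * δ) * n) * t ^ k n := by gcongr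
    _ ≤ F.card * t ^ k n := by gcongr; exact hspan F hF
    _ ≤ E.card * (1 + t * M) ^ n := hcard
    _ ≤ E.card * Real.exp (δ * n) := by gcongr

theorem exists_forall_nhds_frequently_exp_le_card {α β : Type*} [TopologicalSpace β] {K : Set β}
    (hK : IsCompact K) (hs : s' < s) {E : ℕ → Finset α} {b : ℕ → α → β} (hb : ∀ n x, b n x ∈ K)
    (hE : ∀ᶠ n : ℕ in atTop, Real.exp (s * n) ≤ (E n).card) :
    ∃ a, ∀ U ∈ 𝓝 a, ∃ᶠ n : ℕ in atTop, ∃ E' ⊆ E n,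
      Real.exp (s' * n) ≤ E'.card ∧ ∀ x ∈ E', b n x ∈ U := by
  classical
  by_contra! hcon
  choose U hU hfew using hcon
  obtain ⟨A, -, hA⟩ := hK.elim_nhds_subcover U fun a _ => hU a
  have hfew : ∀ᶠ n : ℕ in atTop, ∀ a ∈ A,
      (Finset.card {x ∈ E n | b n x ∈ U a} : ℝ) ≤ Real.exp (s' * n) := by
    refine (Finset.eventually_all A).2 fun a _ => ?_
    filter_upwards [hfew a] with n hn
    by_contra! hlt
    obtain ⟨x, hx, hxU⟩ := hn _ (Finset.filter_subset _ _) hlt.le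
    exact hxU (Finset.mem_filter.1 hx).2
  have hgap : ∀ᶠ n : ℕ in atTop, (A.card : ℝ) < Real.exp ((s - s') * n) :=
    (Real.tendsto_exp_atTop.comp (tendsto_natCast_atTop_atTop.const_mul_atTop
      (sub_pos.2 hs))).eventually_gt_atTop _
  obtain ⟨n, hn, hfew, hgap⟩ := (hE.and (hfew.and hgap)).exists
  have hcover : E n ⊆ A.biUnion fun a => {x ∈ E n | b n x ∈ U a} := fun x hx => by
    obtain ⟨a, ha, hxa⟩ := mem_iUnion₂.1 (hA (hb n x))
    exact Finset.mem_biUnion.2 ⟨a, ha, Finset.mem_filter.2 ⟨hx, hxa⟩⟩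
  refine lt_irrefl (Real.exp (s * n)) ?_
  calc Real.exp (s * n) ≤ (E n).card := hn
    _ ≤ ∑ a ∈ A, (Finset.card {x ∈ E n | b n x ∈ U a} : ℝ) := by
        exact_mod_cast (Finset.card_le_card hcover).trans Finset.card_biUnion_le
    _ ≤ A.card * Real.exp (s' * n) := by
        rw [← nsmul_eq_mul]
        exact Finset.sum_le_card_nsmul _ _ _ hfew
    _ < Real.exp ((s - s') * n) * Real.exp (s' * n) := by gcongr
    _ = Real.exp (s * n) := by rw [← Real.exp_add]; ring_nf

theorem abs_birkhoffAverage_le {α : Type*} {f : α → α} {φ : α → ℝ} {B : ℝ}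
    (hφ : ∀ x, |φ x| ≤ B) (n : ℕ) (x : α) :
    |birkhoffAverage ℝ f φ n x| ≤ B := by
  have hB : 0 ≤ B := (abs_nonneg _).trans (hφ x)
  have hsum : |birkhoffSum f φ n x| ≤ n * B := by
    simpa [birkhoffSum] using norm_sum_le_of_le (f := fun i => φ (f^[i] x)) (Finset.range n)
      fun i _ => hφ _
  rw [birkhoffAverage, smul_eq_mul, abs_mul, abs_of_nonneg (by positivity), inv_mul_eq_div]
  exact div_le_of_le_mul₀ n.cast_nonneg hB (by linarith)

theorem exists_frequently_isHammingSeparated_birkhoffAverage_mem [CompactSpace X] (hr : 0 < r)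
    (hs : s' < s) {k : ℕ → ℕ} (hk : (fun n => (k n : ℝ)) =o[atTop] fun n => (n : ℝ))
    (h : mBLim f univ s (3 * r) ≠ 0) {φ : X → ℝ} {B : ℝ} (hφ : ∀ x, |φ x| ≤ B) :
    ∃ a, ∀ U ∈ 𝓝 a, ∃ᶠ n : ℕ in atTop, ∃ E : Finset X,
      IsHammingSeparated f n (k n) r E ∧ Real.exp (s' * n) ≤ E.card ∧
        ∀ x ∈ E, birkhoffAverage ℝ f φ n x ∈ U := by
  obtain ⟨s'', hs'', hs⟩ := exists_between hs
  obtain ⟨E, hE⟩ := (eventually_exists_isHammingSeparated_exp_le_card hr hs hk h).choice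
  obtain ⟨a, ha⟩ := exists_forall_nhds_frequently_exp_le_card (isCompact_Icc (a := -B) (b := B))
    hs'' (fun n x => abs_le.1 (abs_birkhoffAverage_le (f := f) hφ n x)) (hE.mono fun _ h => h.2)
  refine ⟨a, fun U hU => ((ha U hU).and_eventually hE).mono ?_⟩
  rintro n ⟨⟨E', hE', hcard, hmem⟩, hsep, -⟩
  exact ⟨E', hsep.mono hE', hcard, hmem⟩

end Hamming

/-! ### Shadowing -/

section Shadowing

variable {X : Type*} [PseudoMetricSpace X] {f : X → X} {g : ℕ → ℕ} {x y z : X} {n : ℕ}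
  {δ ε r r' : ℝ}

theorem sepCount_eq_card (f : X → X) (x y : X) (n : ℕ) (r : ℝ)
    [DecidablePred fun j : ℕ => r < dist (f^[j] x) (f^[j] y)] :
    sepCount f x y n r = Finset.card {j ∈ Finset.range n | r < dist (f^[j] x) (f^[j] y)} := by
  unfold sepCount
  congr

theorem sepCount_eq_zero_iff :
    sepCount f x y n r = 0 ↔ ∀ i < n, dist (f^[i] x) (f^[i] y) ≤ r := by
  simp [sepCount, Finset.filter_eq_empty_iff]

theorem sepCount_add_le (f : X → X) (x y z : X) (n : ℕ) (r r' : ℝ) :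
    sepCount f x z n (r + r') ≤ sepCount f x y n r + sepCount f y z n r' := by
  classical
  simp only [sepCount_eq_card]
  refine (Finset.card_le_card fun j hj => ?_).trans (Finset.card_union_le _ _)
  simp only [Finset.mem_union, Finset.mem_filter] at hj ⊢
  by_contra! hcon
  linarith [hcon.1 hj.1, hcon.2 hj.1, dist_triangle (f^[j] x) (f^[j] y) (f^[j] z)]

theorem sepCount_anti (hr : r ≤ r') : sepCount f x y n r' ≤ sepCount f x y n r := by
  classical
  simp only [sepCount_eq_card]
  exact Finset.card_le_card (Finset.monotone_filter_right _ fun _ _ => hr.trans_lt)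

theorem mem_blowupBall_iff : y ∈ blowupBall f g x n ε ↔ sepCount f x y n ε ≤ g n := by
  classical
  constructor
  · rintro ⟨Λ, -, hcard, hclose⟩
    refine le_trans (Finset.card_le_card fun j hj => ?_) hcard
    obtain ⟨hjn, hjfar⟩ := Finset.mem_filter.1 hj
    simp only [Finset.mem_sdiff]
    exact ⟨hjn, fun hjΛ => hjfar.not_ge (hclose j hjΛ)⟩
  · intro h
    refine ⟨{j ∈ Finset.range n | dist (f^[j] x) (f^[j] y) ≤ ε}, Finset.filter_subset _ _,
      le_trans (Finset.card_le_card fun j hj => ?_) h, fun j hj => (Finset.mem_filter.1 hj).2⟩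
    simp only [Finset.mem_sdiff, Finset.mem_filter, not_and, not_le] at hj ⊢
    exact ⟨hj.1, hj.2 hj.1⟩

theorem isClosed_blowupBall (hf : Continuous f) : IsClosed (blowupBall f g x n ε) := by
  classical
  refine isOpen_compl_iff.1 (isOpen_iff_mem_nhds.2 fun y hy => ?_)
  have hfar : ∀ᶠ y' in 𝓝 y, ∀ j ∈ (Finset.range n).filter fun j => ε < dist (f^[j] x) (f^[j] y),
      ε < dist (f^[j] x) (f^[j] y') :=
    (Finset.eventually_all _).2 fun j hj =>
      (continuous_const.dist (hf.iterate j)).continuousAt.eventually_const_lt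
        (Finset.mem_filter.1 hj).2
  filter_upwards [hfar] with y' hy'
  rw [mem_compl_iff, mem_blowupBall_iff, not_le] at hy ⊢
  refine hy.trans_le ?_
  simp only [sepCount_eq_card]
  exact Finset.card_le_card fun j hj =>
    Finset.mem_filter.2 ⟨(Finset.mem_filter.1 hj).1, hy' j hj⟩

/-- `z` shadows the sequence of orbit segments of length `l j` starting at `x j`: along the `j`-th
block of times, its orbit is `δ j`-close to that of `x j` with at most `g (l j)` exceptions. The
`g`-almost product property provides such a `z`, and these `z` form the Moran set. -/
def Shadows (f : X → X) (g l : ℕ → ℕ) (δ : ℕ → ℝ) (x : ℕ → X) (z : X) : Prop :=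
  ∀ j, sepCount f (x j) (f^[∑ i ∈ Finset.range j, l i] z) (l j) (δ j) ≤ g (l j)

theorem GAlmostProduct.exists_shadows [CompactSpace X] (hf : Continuous f)
    (h : GAlmostProduct f g) :
    ∃ m : ℝ → ℕ, ∀ (x : ℕ → X) (δ : ℕ → ℝ) (l : ℕ → ℕ), (∀ j, 0 < δ j) → (∀ j, m (δ j) ≤ l j) →
      ∃ z, Shadows f g l δ x z := by
  obtain ⟨m, -, hm⟩ := h
  refine ⟨m, fun x δ l hδ hl => ?_⟩
  let K (k : ℕ) : Set X := ⋂ j ∈ Finset.range k,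
    f^[∑ i ∈ Finset.range j, l i] ⁻¹' blowupBall f g (x j) (l j) (δ j)
  have hK (k : ℕ) : IsClosed (K k) :=
    isClosed_biInter fun j _ => (isClosed_blowupBall hf).preimage (hf.iterate _)
  obtain ⟨z, hz⟩ := IsCompact.nonempty_iInter_of_sequence_nonempty_isCompact_isClosed K
    (fun k => biInter_subset_biInter_left (Finset.range_subset_range.2 k.le_succ))
    (fun k => hm k x δ l (fun j _ => hδ j) fun j _ => hl j) (hK 0).isCompact hK
  refine ⟨z, fun j => mem_blowupBall_iff.1 ?_⟩
  exact mem_iInter₂.1 (mem_iInter.1 hz (j + 1)) j (Finset.self_mem_range_succ j)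

theorem abs_birkhoffSum_sub_le {φ : X → ℝ} {B κ : ℝ} (hB : ∀ x, |φ x| ≤ B) (hκ : 0 ≤ κ)
    (hφ : ∀ p q, dist p q ≤ δ → |φ p - φ q| ≤ κ) (x y : X) (n : ℕ) :
    |birkhoffSum f φ n x - birkhoffSum f φ n y| ≤ n * κ + sepCount f x y n δ * (2 * B) := by
  classical
  have hterm (i : ℕ) : |φ (f^[i] x) - φ (f^[i] y)| ≤
      κ + if δ < dist (f^[i] x) (f^[i] y) then 2 * B else 0 := by
    split_ifs with h
    · linarith [abs_sub (φ (f^[i] x)) (φ (f^[i] y)), hB (f^[i] x), hB (f^[i] y)]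
    · simpa using hφ _ _ (not_lt.1 h)
  rw [birkhoffSum, birkhoffSum, ← Finset.sum_sub_distrib, sepCount_eq_card]
  refine (Finset.abs_sum_le_sum_abs _ _).trans ((Finset.sum_le_sum fun i _ => hterm i).trans_eq ?_)
  simp [Finset.sum_add_distrib, Finset.sum_ite]

theorem eq_of_shadows_of_mem_bowenBall {l : ℕ → ℕ} {δ : ℕ → ℝ} {x x' : ℕ → X} {y y' : X} {j : ℕ}
    {E : Finset X} (hy : Shadows f g l δ x y) (hy' : Shadows f g l δ x' y') (hδ : δ j ≤ ε)
    (hE : IsHammingSeparated f (l j) (2 * g (l j)) (4 * ε) E) (hx : x j ∈ E) (hx' : x' j ∈ E)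
    (hn : ∑ i ∈ Finset.range (j + 1), l i ≤ n) (hyz : y ∈ bowenBall f z n ε)
    (hyz' : y' ∈ bowenBall f z n ε) : x j = x' j := by
  set M := ∑ i ∈ Finset.range j, l i with hM
  rw [Finset.sum_range_succ, ← hM] at hn
  have hclose : sepCount f (f^[M] y) (f^[M] y') (l j) (2 * ε) = 0 := by
    refine sepCount_eq_zero_iff.2 fun i hi => ?_
    rw [← Function.iterate_add_apply, ← Function.iterate_add_apply]
    linarith [hyz (i + M) (by omega), hyz' (i + M) (by omega),
      dist_triangle_left (f^[i + M] y) (f^[i + M] y') (f^[i + M] z)]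
  by_contra hne
  refine (hE hx hx' hne).not_ge ?_
  calc sepCount f (x j) (x' j) (l j) (4 * ε)
      = sepCount f (x j) (x' j) (l j) (ε + (2 * ε + ε)) := by ring_nf
    _ ≤ sepCount f (x j) (f^[M] y) (l j) ε +
          (sepCount f (f^[M] y) (f^[M] y') (l j) (2 * ε) +
            sepCount f (f^[M] y') (x' j) (l j) ε) :=
        (sepCount_add_le ..).trans (by gcongr; exact sepCount_add_le ..)
    _ ≤ 2 * g (l j) := by
        rw [hclose, sepCount_comm f (f^[M] y')]
        linarith [(sepCount_anti hδ).trans (hy j), (sepCount_anti hδ).trans (hy' j)]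

end Shadowing

/-! ### Sequences split into blocks -/

section Blocks

open Asymptotics

variable {l : ℕ → ℕ}

theorem le_sum_range_of_pos (hl : ∀ j, 0 < l j) (k : ℕ) : k ≤ ∑ j ∈ Finset.range k, l j := by
  simpa using Finset.card_nsmul_le_sum (Finset.range k) l 1 fun j _ => hl j

theorem exists_tendsto_sum_range_le_lt (hl : ∀ j, 0 < l j) :
    ∃ k : ℕ → ℕ, Tendsto k atTop atTop ∧ ∀ n, ∑ j ∈ Finset.range (k n), l j ≤ n ∧
      n < ∑ j ∈ Finset.range (k n + 1), l j := by
  have hunbdd : ¬BddAbove (range fun k => ∑ j ∈ Finset.range k, l j) := by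
    rintro ⟨b, hb⟩
    exact ((le_sum_range_of_pos hl (b + 1)).trans (hb (mem_range_self _))).not_gt b.lt_succ_self
  have hblock (n : ℕ) : ∃ k, ∑ j ∈ Finset.range k, l j ≤ n ∧
      n < ∑ j ∈ Finset.range (k + 1), l j := by
    have hn : n ∈ ⋃ k, Ico (∑ j ∈ Finset.range k, l j) (∑ j ∈ Finset.range (k + 1), l j) :=
      (iUnion_Ico_map_succ_eq_Ici (fun k => by simp) hunbdd).ge (by simp)
    simpa using hn
  choose k hk using hblock
  refine ⟨k, tendsto_atTop.2 fun K => ?_, hk⟩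
  filter_upwards [eventually_ge_atTop (∑ j ∈ Finset.range K, l j)] with n hn
  by_contra! hlt
  exact (hn.trans_lt (hk n).2).not_ge (Finset.sum_le_sum_of_subset (Finset.range_mono hlt))

theorem sum_range_sum_range_eq_sum_blocks {E : Type*} [AddCommMonoid E] (u : ℕ → E) (l : ℕ → ℕ)
    (k : ℕ) :
    ∑ i ∈ Finset.range (∑ j ∈ Finset.range k, l j), u i =
      ∑ j ∈ Finset.range k, ∑ i ∈ Finset.range (l j), u (∑ j' ∈ Finset.range j, l j' + i) := by
  induction k with
  | zero => simp
  | succ k ih => rw [Finset.sum_range_succ, Finset.sum_range_add, ih, Finset.sum_range_succ]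

theorem isLittleO_sum_range_of_blocks {E : Type*} [NormedAddCommGroup E] {u : ℕ → E} {B : ℝ}
    (hu : ∀ i, ‖u i‖ ≤ B) (hl : ∀ j, 0 < l j)
    (hlM : (fun j => (l j : ℝ)) =o[atTop] fun j => ((∑ i ∈ Finset.range j, l i : ℕ) : ℝ))
    (hblock : (fun j => ∑ i ∈ Finset.range (l j), u (∑ i ∈ Finset.range j, l i + i))
      =o[atTop] fun j => (l j : ℝ)) :
    (fun n => ∑ i ∈ Finset.range n, u i) =o[atTop] fun n => (n : ℝ) := by
  obtain ⟨k, hk, hkM⟩ := exists_tendsto_sum_range_le_lt hl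
  have hM : (fun n => ((∑ j ∈ Finset.range (k n), l j : ℕ) : ℝ)) =O[atTop] fun n => (n : ℝ) :=
    IsBigO.of_norm_le fun n => by simpa only [Real.norm_natCast] using Nat.cast_le.2 (hkM n).1
  have hMtop : Tendsto (fun K => ∑ j ∈ Finset.range K, (l j : ℝ)) atTop atTop :=
    tendsto_atTop_mono (fun K => by exact_mod_cast le_sum_range_of_pos hl K)
      tendsto_natCast_atTop_atTop
  have hfull : (fun n => ∑ i ∈ Finset.range (∑ j ∈ Finset.range (k n), l j), u i)
      =o[atTop] fun n => (n : ℝ) := by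
    have hsum := (hblock.sum_range (fun j => (l j).cast_nonneg) hMtop).comp_tendsto hk
    simp only [← sum_range_sum_range_eq_sum_blocks, ← Nat.cast_sum] at hsum
    exact hsum.trans_isBigO hM
  have htail : (fun n => ∑ i ∈ Finset.range (n - ∑ j ∈ Finset.range (k n), l j),
      u (∑ j ∈ Finset.range (k n), l j + i)) =o[atTop] fun n => (n : ℝ) := by
    refine (IsBigO.of_bound B (Eventually.of_forall fun n => ?_)).trans_isLittleO
      ((hlM.comp_tendsto hk).trans_isBigO hM)
    have hB : 0 ≤ B := (norm_nonneg _).trans (hu 0)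
    have hlen : n - ∑ j ∈ Finset.range (k n), l j ≤ l (k n) := by
      have := (hkM n).2
      rw [Finset.sum_range_succ] at this
      omega
    calc _ ≤ ∑ _ ∈ Finset.range (n - ∑ j ∈ Finset.range (k n), l j), B :=
          norm_sum_le_of_le _ fun _ _ => hu _
      _ = B * (n - ∑ j ∈ Finset.range (k n), l j : ℕ) := by simp [mul_comm]
      _ ≤ B * ‖(l (k n) : ℝ)‖ := by rw [Real.norm_natCast]; gcongr
  refine (hfull.add htail).congr_left fun n => ?_
  rw [← Finset.sum_range_add, Nat.add_sub_cancel' (hkM n).1]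

theorem exists_tendsto_comp_isLittleO (n : ℕ → ℕ) :
    ∃ κ : ℕ → ℕ, Tendsto κ atTop atTop ∧
      (fun j => (n (κ j) : ℝ)) =o[atTop] fun j => (j : ℝ) := by
  let κ (j : ℕ) : ℕ := Nat.findGreatest (fun k => k * n k ≤ j) j
  have hκ : Tendsto κ atTop atTop := tendsto_atTop.2 fun K => by
    filter_upwards [eventually_ge_atTop (max K (K * n K))] with j hj
    exact Nat.le_findGreatest (le_of_max_le_left hj) (le_of_max_le_right hj)
  have hκn (j : ℕ) : κ j * n (κ j) ≤ j :=
    Nat.findGreatest_spec (P := fun k => k * n k ≤ j) (m := 0) j.zero_le (by simp)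
  refine ⟨κ, hκ, isLittleO_iff_nat_mul_le'.2 fun K => ?_⟩
  filter_upwards [hκ.eventually_ge_atTop K] with j hj
  simp only [Real.norm_natCast]
  exact_mod_cast (Nat.mul_le_mul_right _ hj).trans (hκn j)

theorem eventually_mul_le_mul_sum_range {s t : ℝ} (hst : t < s)
    (hlM : (fun j => (l j : ℝ)) =o[atTop] fun j => ((∑ i ∈ Finset.range j, l i : ℕ) : ℝ)) :
    ∀ᶠ k in atTop, ∀ n : ℕ, ∑ j ∈ Finset.range k, l j ≤ n →
      n < ∑ j ∈ Finset.range (k + 1), l j → t * n ≤ s * (∑ j ∈ Finset.range k, l j : ℕ) := by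
  filter_upwards [(hlM.const_mul_left |t|).def (sub_pos.2 hst)] with k hk n hMn hnM
  obtain ⟨q, rfl⟩ := Nat.exists_eq_add_of_le hMn
  rw [Finset.sum_range_succ] at hnM
  have hq : (q : ℝ) ≤ l k := by exact_mod_cast (by omega : q ≤ l k)
  have htq : t * q ≤ |t| * l k := by gcongr; exact le_abs_self t
  simp only [norm_mul, Real.norm_eq_abs, abs_abs, Nat.abs_cast] at hk
  push_cast at hk ⊢
  linarith

end Blocks

/-! ### Mass distribution on a product of finite sets -/

section MassDistribution

variable {ι : Type*} {A : ι → Type*} [∀ i, Fintype (A i)] [∀ i, Nonempty (A i)]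

theorem infinitePi_uniformOn_le_prod_inv_card [∀ i, MeasurableSpace (A i)]
    [∀ i, MeasurableSingletonClass (A i)] (I : Finset ι) {S : Set (∀ i, A i)}
    (hS : ∀ ω ∈ S, ∀ ω' ∈ S, ∀ i ∈ I, ω i = ω' i) :
    Measure.infinitePi (fun i => ProbabilityTheory.uniformOn (univ : Set (A i))) S ≤
      ∏ i ∈ I, (Fintype.card (A i) : ℝ≥0∞)⁻¹ := by
  have (i : ι) : IsProbabilityMeasure (ProbabilityTheory.uniformOn (univ : Set (A i))) :=
    ProbabilityTheory.isProbabilityMeasure_uniformOn finite_univ univ_nonempty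
  obtain rfl | ⟨ω, hω⟩ := S.eq_empty_or_nonempty
  · simp
  calc _ ≤ Measure.infinitePi (fun i => ProbabilityTheory.uniformOn (univ : Set (A i)))
        (Set.pi I fun i => {ω i}) := measure_mono fun ω' hω' i hi => hS ω' hω' ω hω i hi
    _ = ∏ i ∈ I, (Fintype.card (A i) : ℝ≥0∞)⁻¹ := by
        rw [Measure.infinitePi_pi _ fun i _ => measurableSet_singleton _]
        simp [ProbabilityTheory.uniformOn_univ]

theorem one_le_tsum_of_forall_exists_mem {P : Type*} [Countable P] (I : P → Finset ι)
    (S : P → Set (∀ i, A i)) (hS : ∀ p, ∀ ω ∈ S p, ∀ ω' ∈ S p, ∀ i ∈ I p, ω i = ω' i)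
    (hcover : ∀ ω, ∃ p, ω ∈ S p) {w : P → ℝ≥0∞}
    (hw : ∀ p, ∏ i ∈ I p, (Fintype.card (A i) : ℝ≥0∞)⁻¹ ≤ w p) : 1 ≤ ∑' p, w p := by
  let _ (i : ι) : MeasurableSpace (A i) := ⊤
  have (i : ι) : IsProbabilityMeasure (ProbabilityTheory.uniformOn (univ : Set (A i))) :=
    ProbabilityTheory.isProbabilityMeasure_uniformOn finite_univ univ_nonempty
  let μ := Measure.infinitePi fun i => ProbabilityTheory.uniformOn (univ : Set (A i))
  calc 1 = μ univ := measure_univ.symm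
    _ ≤ μ (⋃ p, S p) := measure_mono fun ω _ => mem_iUnion.2 (hcover ω)
    _ ≤ ∑' p, μ (S p) := measure_iUnion_le S
    _ ≤ ∑' p, w p := ENNReal.tsum_le_tsum fun p =>
        (infinitePi_uniformOn_le_prod_inv_card (I p) (hS p)).trans (hw p)

end MassDistribution

/-! ### Birkhoff limits and invariant measures -/

section InvariantMeasures

theorem mem_Rphi_iff {α : Type*} {f : α → α} {φ : α → ℝ} {a : ℝ} {x : α} :
    x ∈ Rphi f φ a ↔ Tendsto (fun n => birkhoffAverage ℝ f φ n x) atTop (𝓝 a) := by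
  simp [Rphi, birkhoffAverage, birkhoffSum, div_eq_inv_mul]

theorem abs_intPhi_le {α : Type*} [MeasurableSpace α] {φ : α → ℝ} {B : ℝ}
    (hφ : ∀ x, |φ x| ≤ B) (μ : ProbabilityMeasure α) : |intPhi φ μ| ≤ B := by
  simpa [intPhi] using norm_integral_le_of_norm_le_const (μ := (μ : Measure α)) (f := φ)
    (Eventually.of_forall hφ)

variable {X : Type*} [MetricSpace X] [MeasurableSpace X] [BorelSpace X] {f : X → X} {φ : X → ℝ}
  {x : X} {μ : ProbabilityMeasure X} {a : ℝ}

theorem integral_empProb {n : ℕ} (hn : n ≠ 0) (ψ : BoundedContinuousFunction X ℝ) :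
    ∫ y, ψ y ∂(empProb f x n : Measure X) = birkhoffAverage ℝ f ψ n x := by
  change ∫ y, ψ y ∂(empMeasure f x n) = _
  rw [empMeasure, max_eq_left (Nat.one_le_iff_ne_zero.2 hn), integral_smul_measure,
    integral_finsetSum_measure fun i _ => ψ.integrable _]
  simp [birkhoffAverage, birkhoffSum]

theorem integral_eq_of_mem_Vf (hμ : μ ∈ Vf f x) {ψ : BoundedContinuousFunction X ℝ}
    (hψ : Tendsto (fun n => birkhoffAverage ℝ f ψ n x) atTop (𝓝 a)) :
    ∫ y, ψ y ∂(μ : Measure X) = a := by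
  have hcluster : MapClusterPt (∫ y, ψ y ∂(μ : Measure X)) atTop
      fun n => ∫ y, ψ y ∂(empProb f x n : Measure X) :=
    MapClusterPt.continuousAt_comp
      (ProbabilityMeasure.continuous_integral_boundedContinuousFunction ψ).continuousAt hμ
  have hlim : Tendsto (fun n => ∫ y, ψ y ∂(empProb f x n : Measure X)) atTop (𝓝 a) :=
    hψ.congr' ((eventually_ne_atTop 0).mono fun n hn => (integral_empProb hn ψ).symm)
  exact eq_of_nhds_neBot (ClusterPt.mono hcluster hlim)

theorem mem_invSet_of_mem_Vf (hf : Continuous f) (hμ : μ ∈ Vf f x) : μ ∈ invSet f := by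
  have : IsProbabilityMeasure (Measure.map f (μ : Measure X)) :=
    Measure.isProbabilityMeasure_map hf.measurable.aemeasurable
  refine ext_of_forall_integral_eq_of_IsFiniteMeasure fun ψ => ?_
  rw [integral_map hf.measurable.aemeasurable ψ.continuous.aestronglyMeasurable]
  let ψf : BoundedContinuousFunction X ℝ := ψ.compContinuous ⟨f, hf⟩
  have hcoboundary : ∫ y, (ψf - ψ) y ∂(μ : Measure X) = 0 := by
    refine integral_eq_of_mem_Vf hμ ?_
    refine (tendsto_birkhoffAverage_apply_sub_birkhoffAverage' ℝ ψ.isBounded_range f x).congr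
      fun n => ?_
    simp only [birkhoffAverage, birkhoffSum, ← smul_sub, ← Finset.sum_sub_distrib,
      ← Function.iterate_succ_apply, Function.iterate_succ_apply']
    rfl
  rw [← sub_eq_zero, ← hcoboundary]
  exact (integral_sub (ψf.integrable _) (ψ.integrable _)).symm

theorem exists_invSet_intPhi_eq_of_mem_Rphi [CompactSpace X] (hf : Continuous f)
    (hφ : Continuous φ) (hx : x ∈ Rphi f φ a) : ∃ μ ∈ invSet f, intPhi φ μ = a := by
  obtain ⟨μ, hμ⟩ := exists_clusterPt_of_compactSpace (map (empProb f x) atTop)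
  exact ⟨μ, mem_invSet_of_mem_Vf hf hμ, integral_eq_of_mem_Vf hμ
    (ψ := BoundedContinuousFunction.mkOfCompact ⟨φ, hφ⟩) (mem_Rphi_iff.1 hx)⟩

theorem biUnion_Icc_Rphi_eq_iUnion_Rphi [CompactSpace X] (hf : Continuous f)
    (hφ : Continuous φ) :
    ⋃ a ∈ Icc (sInf (intPhi φ '' invSet f)) (sSup (intPhi φ '' invSet f)), Rphi f φ a =
      ⋃ a, Rphi f φ a := by
  refine (iUnion₂_subset_iUnion _ _).antisymm (iUnion_subset fun a x hx => ?_)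
  obtain ⟨B, hB⟩ := isCompact_univ.exists_bound_of_continuousOn hφ.continuousOn
  have hmem (μ : ProbabilityMeasure X) := abs_le.1 (abs_intPhi_le (fun x => hB x (mem_univ x)) μ)
  obtain ⟨μ, hμ, rfl⟩ := exists_invSet_intPhi_eq_of_mem_Rphi hf hφ hx
  refine mem_biUnion ⟨csInf_le ⟨-B, ?_⟩ (mem_image_of_mem _ hμ),
    le_csSup ⟨B, ?_⟩ (mem_image_of_mem _ hμ)⟩ hx <;> rintro _ ⟨ν, -, rfl⟩
  · exact (hmem ν).1
  · exact (hmem ν).2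

end InvariantMeasures

/-! ### The Moran set -/

section Moran

open Asymptotics

variable {X : Type*} [PseudoMetricSpace X] {f : X → X} {g l : ℕ → ℕ} {δ : ℕ → ℝ} {x : ℕ → X}
  {z : X} {φ : X → ℝ} {a B ε s t : ℝ}

theorem isLittleO_birkhoffSum_sub_of_shadows (hB : ∀ x, |φ x| ≤ B) (hφ : UniformContinuous φ)
    (hgl : (fun j => (g (l j) : ℝ)) =o[atTop] fun j => (l j : ℝ)) (hδ : Tendsto δ atTop (𝓝 0))
    (hz : Shadows f g l δ x z) :
    (fun j => birkhoffSum f φ (l j) (f^[∑ i ∈ Finset.range j, l i] z) -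
      birkhoffSum f φ (l j) (x j)) =o[atTop] fun j => (l j : ℝ) := by
  have hB₀ : 0 ≤ B := (abs_nonneg _).trans (hB z)
  refine isLittleO_iff.2 fun c hc => ?_
  obtain ⟨η, hη, hφη⟩ := Metric.uniformContinuous_iff.1 hφ (c / 2) (half_pos hc)
  filter_upwards [hδ.eventually_lt_const hη, (hgl.const_mul_left (2 * B)).def (half_pos hc)]
    with j hδj hgj
  simp only [norm_mul, Real.norm_eq_abs, Nat.abs_cast, abs_two, abs_of_nonneg hB₀] at hgj ⊢
  have hcount : (sepCount f (x j) (f^[∑ i ∈ Finset.range j, l i] z) (l j) (δ j) : ℝ) * (2 * B) ≤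
      g (l j) * (2 * B) := by
    gcongr
    exact hz j
  have hsum := abs_birkhoffSum_sub_le (f := f) hB (half_pos hc).le
    (fun p q hpq => (hφη (hpq.trans_lt hδj)).le) (x j) (f^[∑ i ∈ Finset.range j, l i] z) (l j)
  rw [abs_sub_comm]
  linarith

theorem mem_Rphi_of_shadows (hB : ∀ x, |φ x| ≤ B) (hφ : UniformContinuous φ)
    (hl : ∀ j, 0 < l j)
    (hlM : (fun j => (l j : ℝ)) =o[atTop] fun j => ((∑ i ∈ Finset.range j, l i : ℕ) : ℝ))
    (hgl : (fun j => (g (l j) : ℝ)) =o[atTop] fun j => (l j : ℝ)) (hδ : Tendsto δ atTop (𝓝 0))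
    (hx : Tendsto (fun j => birkhoffAverage ℝ f φ (l j) (x j)) atTop (𝓝 a))
    (hz : Shadows f g l δ x z) : z ∈ Rphi f φ a := by
  have havg : (fun j => birkhoffSum f φ (l j) (x j) - l j * a) =o[atTop] fun j => (l j : ℝ) := by
    have hdev := (isLittleO_one_iff ℝ).2 (tendsto_sub_nhds_zero_iff.2 hx)
    refine ((isBigO_refl (fun j => (l j : ℝ)) atTop).mul_isLittleO hdev).congr (fun j => ?_)
      (by simp)
    have : (l j : ℝ) ≠ 0 := by exact_mod_cast (hl j).ne'
    simp only [birkhoffAverage, smul_eq_mul]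
    field_simp
  have hbdd (i : ℕ) : ‖φ (f^[i] z) - a‖ ≤ B + |a| :=
    (abs_sub _ _).trans (by gcongr; exact hB _)
  have hsum : (fun n => ∑ i ∈ Finset.range n, (φ (f^[i] z) - a)) =o[atTop] fun n => (n : ℝ) := by
    refine isLittleO_sum_range_of_blocks hbdd hl hlM
      (((isLittleO_birkhoffSum_sub_of_shadows hB hφ hgl hδ hz).add havg).congr_left fun j => ?_)
    simp only [birkhoffSum, ← Function.iterate_add_apply, Finset.sum_sub_distrib, add_comm,
      Finset.sum_const, Finset.card_range, nsmul_eq_mul]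
    ring
  refine tendsto_sub_nhds_zero_iff.1 (hsum.tendsto_div_nhds_zero.congr' ?_)
  filter_upwards [eventually_ne_atTop 0] with n hn
  simp only [Finset.sum_sub_distrib, Finset.sum_const, Finset.card_range, nsmul_eq_mul]
  field_simp

theorem prod_inv_card_le_ofReal_exp {α : Type*} {E : ℕ → Finset α}
    (hE : ∀ j, Real.exp (s * l j) ≤ (E j).card) (k : ℕ) :
    ∏ j ∈ Finset.range k, ((E j).card : ℝ≥0∞)⁻¹ ≤
      ENNReal.ofReal (Real.exp (-(s * (∑ j ∈ Finset.range k, l j : ℕ)))) := by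
  push_cast
  rw [Finset.mul_sum, ← Finset.sum_neg_distrib, Real.exp_sum,
    ENNReal.ofReal_prod_of_nonneg fun j _ => (Real.exp_pos _).le]
  refine Finset.prod_le_prod' fun j _ => ?_
  rw [Real.exp_neg, ENNReal.ofReal_inv_of_pos (Real.exp_pos _), ENNReal.inv_le_inv,
    ← ENNReal.ofReal_natCast]
  exact ENNReal.ofReal_le_ofReal (hE j)

theorem mBLim_ne_zero_of_shadows {E : ℕ → Finset X} {Z : (∀ j, E j) → X} {R : Set X}
    (hl : ∀ j, 0 < l j)
    (hlM : (fun j => (l j : ℝ)) =o[atTop] fun j => ((∑ i ∈ Finset.range j, l i : ℕ) : ℝ))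
    (hsep : ∀ j, IsHammingSeparated f (l j) (2 * g (l j)) (4 * ε) (E j))
    (hcard : ∀ j, Real.exp (s * l j) ≤ (E j).card) (hδ : ∀ j, δ j ≤ ε)
    (hZ : ∀ ω, Shadows f g l δ (fun j => ω j) (Z ω)) (hR : ∀ ω, Z ω ∈ R) (hts : t < s) :
    mBLim f R t ε ≠ 0 := by
  obtain ⟨k, hk, hkM⟩ := exists_tendsto_sum_range_le_lt hl
  obtain ⟨N, hN⟩ := eventually_atTop.1
    (hk.eventually (eventually_mul_le_mul_sum_range hts hlM))
  have (j : ℕ) : Nonempty (E j) := by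
    have hpos := (Real.exp_pos _).trans_le (hcard j)
    exact (Finset.card_pos.1 (by exact_mod_cast hpos)).to_subtype
  refine mBLim_ne_zero_of_one_le_coverSum N fun C hC hCN hcover => ?_
  have := hC.to_subtype
  -- A Bowen ball of length `n` determines the first `k n` coordinates of `ω`.
  refine one_le_tsum_of_forall_exists_mem (fun p : C => Finset.range (k p.1.2))
    (fun p => {ω | Z ω ∈ bowenBall f p.1.1 p.1.2 ε}) (fun p ω hω ω' hω' j hj => ?_)
    (fun ω => by simpa using hcover (hR ω)) fun p => ?_
  · have hlen : ∑ i ∈ Finset.range (j + 1), l i ≤ p.1.2 :=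
      (Finset.sum_le_sum_of_subset (Finset.range_mono (Finset.mem_range.1 hj))).trans (hkM _).1
    exact Subtype.ext (eq_of_shadows_of_mem_bowenBall (hZ ω) (hZ ω') (hδ j) (hsep j) (ω j).2
      (ω' j).2 hlen hω hω')
  · simp only [Fintype.card_coe]
    refine (prod_inv_card_le_ofReal_exp hcard _).trans (ENNReal.ofReal_le_ofReal ?_)
    rw [Real.exp_le_exp, neg_mul, neg_le_neg_iff]
    exact hN _ (hCN p p.2) _ (hkM _).1 (hkM _).2

theorem exists_blocks_isHammingSeparated_birkhoffAverage_mem {r : ℝ} (m : ℕ → ℕ)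
    (h : ∀ U ∈ 𝓝 a, ∃ᶠ n : ℕ in atTop, ∃ E : Finset X, IsHammingSeparated f n (2 * g n) r E ∧
      Real.exp (s * n) ≤ E.card ∧ ∀ x ∈ E, birkhoffAverage ℝ f φ n x ∈ U) :
    ∃ (l κ : ℕ → ℕ) (E : ℕ → Finset X), Tendsto κ atTop atTop ∧ Tendsto l atTop atTop ∧
      (∀ j, 0 < l j) ∧ (∀ j, m (κ j) ≤ l j) ∧
      ((fun j => (l j : ℝ)) =o[atTop] fun j => ((∑ i ∈ Finset.range j, l i : ℕ) : ℝ)) ∧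
      (∀ j, IsHammingSeparated f (l j) (2 * g (l j)) r (E j)) ∧
      (∀ j, Real.exp (s * l j) ≤ (E j).card) ∧
      ∀ x : ∀ j, E j, Tendsto (fun j => birkhoffAverage ℝ f φ (l j) (x j)) atTop (𝓝 a) := by
  have hstage (k : ℕ) : ∃ n ≥ max (k + 1) (m k), ∃ E : Finset X,
      IsHammingSeparated f n (2 * g n) r E ∧ Real.exp (s * n) ≤ E.card ∧
        ∀ x ∈ E, birkhoffAverage ℝ f φ n x ∈ Metric.ball a (1 / ((k : ℝ) + 1)) :=
    frequently_atTop.1 (h _ (Metric.ball_mem_nhds a (by positivity))) _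
  choose n hn E hsep hcard havg using hstage
  have hn₀ (k : ℕ) : k + 1 ≤ n k := le_of_max_le_left (hn k)
  obtain ⟨κ, hκ, hnκ⟩ := exists_tendsto_comp_isLittleO n
  have hpos (j : ℕ) : 0 < n (κ j) := (Nat.succ_pos _).trans_le (hn₀ _)
  have hM : (fun j : ℕ => (j : ℝ)) =O[atTop] fun j => ((∑ i ∈ Finset.range j, n (κ i) : ℕ) : ℝ) :=
    IsBigO.of_norm_le fun j => by
      simpa only [Real.norm_natCast] using Nat.cast_le.2 (le_sum_range_of_pos hpos j)
  refine ⟨fun j => n (κ j), κ, fun j => E (κ j), hκ,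
    tendsto_atTop_mono (fun j => (Nat.le_succ _).trans (hn₀ (κ j))) hκ, hpos,
    fun j => le_of_max_le_right (hn _), hnκ.trans_isBigO hM, fun j => hsep _, fun j => hcard _,
    fun x => tendsto_iff_dist_tendsto_zero.2 ?_⟩
  exact squeeze_zero (fun _ => dist_nonneg) (fun j => (havg (κ j) (x j) (x j).2).le)
    (tendsto_one_div_add_atTop_nhds_zero_nat.comp hκ)

theorem mBLim_iUnion_Rphi_ne_zero [CompactSpace X] (hf : Continuous f)
    (hg : (fun n => (g n : ℝ)) =o[atTop] fun n => (n : ℝ)) (hgap : GAlmostProduct f g)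
    (hφ : Continuous φ) (hε : 0 < ε) (hts : t < s) (h : mBLim f univ s (12 * ε) ≠ 0) :
    mBLim f (⋃ a, Rphi f φ a) t ε ≠ 0 := by
  obtain ⟨B, hB⟩ := isCompact_univ.exists_bound_of_continuousOn hφ.continuousOn
  replace hB (x : X) : |φ x| ≤ B := hB x (mem_univ x)
  obtain ⟨s', hts', hs'⟩ := exists_between hts
  obtain ⟨a, ha⟩ := exists_frequently_isHammingSeparated_birkhoffAverage_mem
    (r := 4 * ε) (k := fun n => 2 * g n) (by positivity) hs'
    (by simpa using hg.const_mul_left 2) (by convert h using 2; ring) hB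
  obtain ⟨m, hm⟩ := hgap.exists_shadows hf
  let δ (k : ℕ) : ℝ := min ε (1 / ((k : ℝ) + 1))
  have hδ : Tendsto δ atTop (𝓝 0) := by
    simpa [δ, hε.le] using
      (tendsto_const_nhds (x := ε)).min (tendsto_one_div_add_atTop_nhds_zero_nat (𝕜 := ℝ))
  obtain ⟨l, κ, E, hκ, hltop, hl, hml, hlM, hsep, hcard, havg⟩ :=
    exists_blocks_isHammingSeparated_birkhoffAverage_mem (fun k => m (δ k)) ha
  choose Z hZ using fun ω : ∀ j, E j =>
    hm (fun j => ω j) (fun j => δ (κ j)) l (fun j => by positivity) hml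
  exact mBLim_ne_zero_of_shadows hl hlM hsep hcard (fun j => min_le_left _ _) hZ
    (fun ω => mem_iUnion.2 ⟨a, mem_Rphi_of_shadows hB
      (CompactSpace.uniformContinuous_of_continuous hφ) hl hlM (hg.comp_tendsto hltop)
      (hδ.comp hκ) (havg ω) (hZ ω)⟩) hts'

end Moran

/-! ### Change of scale -/

section Scale

theorem tendsto_abs_log_div_div_abs_log {c : ℝ} (hc : c ≠ 0) :
    Tendsto (fun ε => |Real.log (ε / c)| / |Real.log ε|) (𝓝[>] 0) (𝓝 1) := by
  have hlog : Tendsto (fun ε => Real.log c / Real.log ε) (𝓝[>] 0) (𝓝 0) :=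
    tendsto_const_nhds.div_atBot Real.tendsto_log_nhdsGT_zero
  have hone : Tendsto (fun ε => |1 - Real.log c / Real.log ε|) (𝓝[>] 0) (𝓝 1) := by
    simpa using (hlog.const_sub 1).abs
  refine hone.congr' ?_
  filter_upwards [Real.tendsto_log_nhdsGT_zero.eventually_lt_atBot 0, self_mem_nhdsWithin]
    with ε hlogε hε
  rw [← abs_div, Real.log_div (ne_of_gt hε) hc, sub_div, div_self hlogε.ne]

theorem eventually_div_abs_log_le_of_comp_mul_le {h₁ h₂ : ℝ → ℝ} {b b' c : ℝ} (hc : 0 < c)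
    (hscale : ∀ ε > 0, h₁ (c * ε) ≤ h₂ ε) (hbb' : b < b')
    (h : ∀ᶠ ε in 𝓝[>] 0, h₂ ε / |Real.log ε| ≤ b) :
    ∀ᶠ ε in 𝓝[>] 0, h₁ ε / |Real.log ε| ≤ b' := by
  have hdiv : Tendsto (fun ε => ε / c) (𝓝[>] 0) (𝓝[>] 0) :=
    tendsto_nhdsWithin_iff.2 ⟨by simpa using
      ((continuous_id.div_const c).tendsto 0).mono_left nhdsWithin_le_nhds,
      eventually_mem_nhdsWithin.mono fun ε hε => div_pos hε hc⟩
  have hratio : ∀ᶠ ε in 𝓝[>] 0, b * (|Real.log (ε / c)| / |Real.log ε|) < b' := by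
    have := (tendsto_abs_log_div_div_abs_log hc.ne').const_mul b
    rw [mul_one] at this
    exact this.eventually_lt_const hbb'
  filter_upwards [hdiv.eventually h, hratio, self_mem_nhdsWithin,
    (hdiv.eventually (Real.tendsto_log_nhdsGT_zero.eventually_lt_atBot 0))]
    with ε hε hratio hpos hlog
  calc h₁ ε / |Real.log ε| ≤ h₂ (ε / c) / |Real.log ε| := by
        gcongr
        simpa [mul_div_cancel₀ _ hc.ne'] using hscale (ε / c) (div_pos hpos hc)
    _ = h₂ (ε / c) / |Real.log (ε / c)| * (|Real.log (ε / c)| / |Real.log ε|) :=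
        (div_mul_div_cancel₀ (abs_ne_zero.2 hlog.ne)).symm
    _ ≤ b * (|Real.log (ε / c)| / |Real.log ε|) := by gcongr
    _ ≤ b' := hratio.le

theorem limsup_div_abs_log_eq_of_comp_mul_le {h₁ h₂ : ℝ → ℝ} {c : ℝ} (hc : 0 < c)
    (hnonneg : ∀ ε > 0, 0 ≤ h₂ ε) (hle : ∀ ε > 0, h₂ ε ≤ h₁ ε)
    (hscale : ∀ ε > 0, h₁ (c * ε) ≤ h₂ ε) :
    limsup (fun ε => h₁ ε / |Real.log ε|) (𝓝[>] 0) =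
      limsup (fun ε => h₂ ε / |Real.log ε|) (𝓝[>] 0) := by
  rw [limsup_eq, limsup_eq]
  set U := {b | ∀ᶠ ε in 𝓝[>] 0, h₁ ε / |Real.log ε| ≤ b}
  set V := {b | ∀ᶠ ε in 𝓝[>] 0, h₂ ε / |Real.log ε| ≤ b}
  have hUV : U ⊆ V := fun b hb => by
    filter_upwards [mem_ofPred.1 hb, self_mem_nhdsWithin] with ε hε hpos
    exact le_trans (by gcongr; exact hle ε hpos) hε
  have hV₀ : ∀ b ∈ V, 0 ≤ b := fun b hb => by
    obtain ⟨ε, hε, hpos⟩ := ((mem_ofPred.1 hb).and eventually_mem_nhdsWithin).exists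
    exact (div_nonneg (hnonneg ε hpos) (abs_nonneg _)).trans hε
  have hVU : ∀ b ∈ V, ∀ b' > b, b' ∈ U := fun b hb b' hbb' =>
    eventually_div_abs_log_le_of_comp_mul_le hc hscale hbb' hb
  -- If `V` is empty, then so is `U`, and both sides have the same junk value.
  obtain hV | ⟨b, hb⟩ := V.eq_empty_or_nonempty
  · rw [hV, subset_empty_iff.1 (hUV.trans hV.subset)]
  · have hU : U.Nonempty := ⟨b + 1, hVU b hb _ (lt_add_one b)⟩
    refine (le_csInf ⟨b, hb⟩ fun b hb => le_of_forall_gt fun b' hb' => ?_).antisymm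
      (csInf_le_csInf ⟨0, hV₀⟩ hU hUV)
    obtain ⟨b'', hb'', hlt⟩ := exists_between hb'
    exact (csInf_le ⟨0, fun b hb => hV₀ b (hUV hb)⟩ (hVU b hb b'' hb'')).trans_lt hlt

end Scale

theorem mdimUpper_univ_eq_of_forall_mBLim_ne_zero {X : Type*} [PseudoMetricSpace X]
    [CompactSpace X] [Nonempty X] {f : X → X} {Z : Set X} {c : ℝ} (hc : 0 < c)
    (hZ : ∀ ε > 0, ∀ s t, t < s → mBLim f univ s (c * ε) ≠ 0 → mBLim f Z t ε ≠ 0) :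
    mdimUpper f univ = mdimUpper f Z := by
  have hne : Z.Nonempty := nonempty_of_mBLim_ne_zero
    (hZ 1 one_pos 0 (-1) (by norm_num) (mBLim_ne_zero_of_nonpos univ_nonempty le_rfl))
  exact limsup_div_abs_log_eq_of_comp_mul_le hc (fun ε _ => hB_nonneg hne)
    (fun ε hε => hB_le_hB_univ hne hε) fun ε hε => hB_univ_le_hB hε (hZ ε hε)

end MMD

theorem stmt6 {X : Type*} [MetricSpace X] [CompactSpace X] [Nonempty X]
    [MeasurableSpace X] [BorelSpace X]
    (f : X → X) (hf : Continuous f) (g : ℕ → ℕ) (hg : IsBlowup g)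
    (hgap : GAlmostProduct f g)
    (φ : X → ℝ) (hφ : Continuous φ) :
    mdimUpper f (Set.univ : Set X) =
      mdimUpper f (⋃ a ∈ Set.Icc (sInf (intPhi φ '' invSet f)) (sSup (intPhi φ '' invSet f)),
        Rphi f φ a) := by
  have hgo : (fun n => (g n : ℝ)) =o[atTop] fun n => (n : ℝ) :=
    (Asymptotics.isLittleO_iff_tendsto' ((eventually_ne_atTop 0).mono fun n hn h =>
      absurd (Nat.cast_eq_zero.1 h) hn)).2 hg.ratio_tendsto_zero
  rw [biUnion_Icc_Rphi_eq_iUnion_Rphi hf hφ]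
  exact mdimUpper_univ_eq_of_forall_mBLim_ne_zero (c := 12) (by norm_num) fun ε hε s t hts h =>
    mBLim_iUnion_Rphi_ne_zero hf hgo hgap hφ hε hts h

end
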